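/- Let V be a finite-dimensional real vector space with a symplectic form ω, and let c : V → V be a linear anti-symplectic involution. Consider the set ℝ𝒥 = { J : V → V linear | J ∘ J = −id, ω(v, J v) > 0 for all v ≠ 0, and c ∘ J = −J ∘ c }, topologized as a subspace of the space of continuous linear endomorphisms of V. Then ℝ𝒥 is non-empty and contractible. (Linear version of Proposition 1.1: ℝ𝒥_ω is a non-empty contractible space.) -/

import Mathlib

/-!
Fix `j ∈ ℝ𝒥` for which `g = ω(·, j ·)` is symmetric. Writing `J = j N`, the taming condition says
that `N = -jJ` is strictly accretive for the inner product `g`, so the Cayley transform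
`A = (1 - N)(1 + N)⁻¹`, which is its own inverse, makes it a strict `g`-contraction. Moreover
`J² = -1` becomes `jA = -Aj`, and `cJ = -Jc` becomes `cA = Ac`. These conditions on `A` are stable
under scaling by `[0, 1]`, so `ℝ𝒥` is homeomorphic to a star-shaped set.

To find `j`, choose a `c`-invariant inner product `B` and let `d` represent it, that is,
`ω(u, d v) = B(u, v)`. Then `d` exchanges the `±1`-eigenspaces of `c`, and `j` is `d` on the
`+1`-eigenspace and `-d⁻¹` on the `-1`-eigenspace.
-/

open Set

theorem contractibleSpace_of_leftInvOn {X Y : Type*} [TopologicalSpace X] [TopologicalSpace Y]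
    {s : Set X} {t : Set Y} [ContractibleSpace t] {f : X → Y} {g : Y → X}
    (hf : ContinuousOn f s) (hg : ContinuousOn g t) (hst : MapsTo f s t) (hts : MapsTo g t s)
    (hgf : LeftInvOn g f s) : ContractibleSpace s := by
  let F : C(s, t) := ⟨_, hf.mapsToRestrict hst⟩
  let G : C(t, s) := ⟨_, hg.mapsToRestrict hts⟩
  have hGF : G.comp ((ContinuousMap.id t).comp F) = ContinuousMap.id s :=
    ContinuousMap.ext fun x => Subtype.ext (hgf x.2)
  rw [contractible_iff_id_nullhomotopic, ← hGF]
  exact ((id_nullhomotopic t).comp_left F).comp_right G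

section Cayley

variable {R : Type*}

section Ring

variable [Ring R] {a b x : R}

/-- The Cayley transform `(1 - a)(1 + a)⁻¹`, an involution exchanging strictly accretive operators
and strict contractions. It has the junk value `0` when `1 + a` is not invertible. -/
noncomputable def cayley (a : R) : R := (1 - a) * Ring.inverse (1 + a)

theorem cayley_mul_one_add (ha : IsUnit (1 + a)) : cayley a * (1 + a) = 1 - a :=
  Ring.inverse_mul_cancel_right _ _ ha

theorem cayley_eq_of_mul_one_add_eq (ha : IsUnit (1 + a)) (h : b * (1 + a) = 1 - a) :
    cayley a = b :=
  ha.mul_right_cancel ((cayley_mul_one_add ha).trans h.symm)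

theorem one_add_cayley_mul_one_add (ha : IsUnit (1 + a)) : (1 + cayley a) * (1 + a) = 2 := by
  rw [add_mul, cayley_mul_one_add ha, one_mul, add_add_sub_cancel, one_add_one_eq_two]

theorem isUnit_one_add_cayley (h2 : IsUnit (2 : R)) (ha : IsUnit (1 + a)) :
    IsUnit (1 + cayley a) := by
  rw [← one_add_cayley_mul_one_add ha] at h2
  obtain ⟨u, hu⟩ := ha
  rwa [← hu, Units.isUnit_mul_units] at h2

theorem cayley_cayley (h2 : IsUnit (2 : R)) (ha : IsUnit (1 + a)) : cayley (cayley a) = a := by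
  refine cayley_eq_of_mul_one_add_eq (isUnit_one_add_cayley h2 ha) (ha.mul_right_cancel ?_)
  rw [mul_assoc, one_add_cayley_mul_one_add ha, sub_mul, cayley_mul_one_add ha]
  noncomm_ring

theorem commute_cayley (ha : IsUnit (1 + a)) (h : Commute x a) : Commute x (cayley a) := by
  have h_add : Commute x (1 + a) := (Commute.one_right x).add_right h
  refine ha.mul_right_cancel ?_
  calc x * cayley a * (1 + a) = x * (1 - a) := by rw [mul_assoc, cayley_mul_one_add ha]
    _ = (1 - a) * x := ((Commute.one_right x).sub_right h).eq
    _ = cayley a * x * (1 + a) := by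
      rw [mul_assoc, h_add.eq, ← mul_assoc, cayley_mul_one_add ha]

theorem semiconjBy_cayley_neg (ha : IsUnit (1 + a)) (h : a * x * a = x) :
    SemiconjBy x (cayley a) (-cayley a) := by
  refine ha.mul_right_cancel ?_
  calc x * cayley a * (1 + a) = x - x * a := by
        rw [mul_assoc, cayley_mul_one_add ha, mul_sub, mul_one]
    _ = -((1 - a) * (x * a)) := by rw [sub_mul, ← mul_assoc a, h, one_mul, neg_sub]
    _ = -cayley a * (a * x * a + x * a) := by
      rw [← cayley_mul_one_add ha]
      noncomm_ring
    _ = -cayley a * x * (1 + a) := by rw [h, mul_assoc, mul_one_add x]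

theorem cayley_mul_mul_cayley (ha : IsUnit (1 + a)) (h : SemiconjBy x a (-a)) :
    cayley a * x * cayley a = x := by
  have h_sub : x * (1 - a) = (1 + a) * x := by rw [mul_sub, h.eq]; noncomm_ring
  have h_add : (1 - a) * x = x * (1 + a) := by rw [mul_add, h.eq]; noncomm_ring
  refine ha.mul_right_cancel ?_
  rw [mul_assoc, cayley_mul_one_add ha, mul_assoc, h_sub, ← mul_assoc, cayley_mul_one_add ha, h_add]

end Ring

theorem continuousAt_cayley [NormedRing R] [HasSummableGeomSeries R] {a : R}
    (ha : IsUnit (1 + a)) : ContinuousAt cayley a := by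
  have h_inverse : ContinuousAt Ring.inverse (1 + a) := by
    obtain ⟨u, hu⟩ := ha
    exact hu ▸ NormedRing.inverse_continuousAt u
  exact (continuousAt_const.sub continuousAt_id).mul
    (h_inverse.comp' (continuousAt_const.add continuousAt_id))

end Cayley

section QuarterTurn

variable {R : Type*} [Ring R]

/-- When the unit `d` exchanges the images of the idempotents `p` and `1 - p`, the square root of
`-1` that is `d` on the first and `-d⁻¹` on the second. -/
def quarterTurn (d : Rˣ) (p : R) : R := d * p - ↑d⁻¹ * (1 - p)

variable {d : Rˣ} {p : R}

theorem quarterTurn_mul (hp : IsIdempotentElem p) : quarterTurn d p * p = d * p := by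
  rw [quarterTurn, sub_mul, mul_assoc, hp.eq, mul_assoc, hp.one_sub_mul_self, mul_zero, sub_zero]

theorem quarterTurn_mul_one_sub (hp : IsIdempotentElem p) :
    quarterTurn d p * (1 - p) = -(↑d⁻¹ * (1 - p)) := by
  rw [quarterTurn, sub_mul, mul_assoc, hp.mul_one_sub_self, mul_assoc, hp.one_sub.eq, mul_zero,
    zero_sub]

theorem semiconjBy_quarterTurn (hp : IsIdempotentElem p) (h : SemiconjBy ↑d p (1 - p)) :
    SemiconjBy (quarterTurn d p) p (1 - p) := by
  have h_inv : SemiconjBy ↑d⁻¹ (1 - p) p := h.units_inv_symm_left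
  rw [SemiconjBy, quarterTurn_mul hp, quarterTurn, h_inv.eq, mul_sub, ← mul_assoc, ← mul_assoc,
    hp.one_sub_mul_self, zero_mul, sub_zero, ← h.eq, mul_assoc, hp.eq]

theorem quarterTurn_mul_self (hp : IsIdempotentElem p) (h : SemiconjBy ↑d p (1 - p)) :
    quarterTurn d p * quarterTurn d p = -1 := by
  set j := quarterTurn d p
  have hjp : j * p = (1 - p) * j := (semiconjBy_quarterTurn hp h).eq
  have hjq : j * (1 - p) = p * j := by rw [mul_sub, hjp]; noncomm_ring
  have h_left : j * (1 - p) * j = -p := by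
    rw [quarterTurn_mul_one_sub hp, neg_mul, mul_assoc, ← hjp, quarterTurn_mul hp,
      Units.inv_mul_cancel_left]
  have h_right : j * p * j = -(1 - p) := by
    rw [quarterTurn_mul hp, mul_assoc, ← hjq, quarterTurn_mul_one_sub hp, mul_neg,
      Units.mul_inv_cancel_left]
  calc j * j = j * (1 - p) * j + j * p * j := by noncomm_ring
    _ = -1 := by rw [h_left, h_right]; abel

end QuarterTurn

section HalfOneAdd

variable {R : Type*} [Ring R] [Algebra ℝ R] {c d : R}

theorem isIdempotentElem_half_smul_one_add (hc : c * c = 1) :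
    IsIdempotentElem ((1 / 2 : ℝ) • (1 + c)) := by
  have h_sq : (1 + c) * (1 + c) = (2 : ℝ) • (1 + c) := by
    rw [two_smul, mul_add, mul_one, add_mul, one_mul, hc, add_comm c]
  rw [IsIdempotentElem, smul_mul_smul_comm, h_sq, smul_smul]
  norm_num

theorem semiconjBy_half_smul_one_add_iff :
    SemiconjBy d ((1 / 2 : ℝ) • (1 + c)) (1 - (1 / 2 : ℝ) • (1 + c)) ↔ SemiconjBy d c (-c) := by
  have h_sub : 1 - (1 / 2 : ℝ) • (1 + c) = (1 / 2 : ℝ) • (1 + -c) := by module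
  rw [h_sub, SemiconjBy, SemiconjBy, mul_smul_comm, smul_mul_assoc, smul_right_inj (by norm_num),
    mul_add, add_mul, mul_one, one_mul, add_right_inj]

end HalfOneAdd

section Tames

variable {V : Type*} [NormedAddCommGroup V] [NormedSpace ℝ V]
  {B : V →ₗ[ℝ] V →ₗ[ℝ] ℝ} {S T : V →L[ℝ] V}

/-- `B` tames `T` if `B(v, T v) > 0` for all `v ≠ 0`. For a symplectic form this is the taming
condition on complex structures, for an inner product it says that `T` is strictly accretive, and
`Tames B 1` says that `B` is positive definite. -/
def Tames (B : V →ₗ[ℝ] V →ₗ[ℝ] ℝ) (T : V →L[ℝ] V) : Prop :=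
  ∀ v, v ≠ 0 → 0 < B v (T v)

/-- `T` is a strict contraction for the quadratic form `v ↦ B(v, v)`. -/
def StrictlyContracts (B : V →ₗ[ℝ] V →ₗ[ℝ] ℝ) (T : V →L[ℝ] V) : Prop :=
  ∀ v, v ≠ 0 → B (T v) (T v) < B v v

theorem Tames.nonneg (h : Tames B T) (v : V) : 0 ≤ B v (T v) := by
  rcases eq_or_ne v 0 with rfl | hv
  · simp
  · exact (h v hv).le

theorem Tames.add (hS : Tames B S) (hT : Tames B T) : Tames B (S + T) := fun v hv => by
  simpa only [add_apply, map_add] using add_pos (hS v hv) (hT v hv)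

theorem isUnit_of_forall_apply_ne_zero [FiniteDimensional ℝ V] (h : ∀ v, v ≠ 0 → T v ≠ 0) :
    IsUnit T := by
  have : CompleteSpace V := FiniteDimensional.complete ℝ V
  rw [ContinuousLinearMap.isUnit_iff_isUnit_toLinearMap, LinearMap.isUnit_iff_ker_eq_bot,
    LinearMap.ker_eq_bot']
  exact fun v hv => not_imp_not.1 (h v) hv

theorem Tames.isUnit [FiniteDimensional ℝ V] (h : Tames B T) : IsUnit T :=
  isUnit_of_forall_apply_ne_zero fun v hv hTv => by
    simpa only [hTv, map_zero, lt_irrefl] using h v hv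

theorem StrictlyContracts.isUnit_one_add [FiniteDimensional ℝ V] (h : StrictlyContracts B T) :
    IsUnit (1 + T) :=
  isUnit_of_forall_apply_ne_zero fun v hv hTv => by
    have hTv_neg : T v = -v := (neg_eq_of_add_eq_zero_right hTv).symm
    simpa only [hTv_neg, map_neg, LinearMap.neg_apply, neg_neg, lt_irrefl] using h v hv

theorem StrictlyContracts.smul (hB : Tames B 1) (h : StrictlyContracts B T) {t : ℝ} (ht₀ : 0 ≤ t)
    (ht₁ : t ≤ 1) : StrictlyContracts B (t • T) := fun v hv => by
  have hTv : 0 ≤ B (T v) (T v) := hB.nonneg (T v)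
  calc B ((t • T) v) ((t • T) v) = t * t * B (T v) (T v) := by
        simp only [smul_apply, map_smul, LinearMap.smul_apply, smul_eq_mul, mul_assoc]
    _ ≤ B (T v) (T v) := mul_le_of_le_one_left hTv (mul_le_one₀ ht₁ ht₀ ht₁)
    _ < B v v := h v hv

theorem exists_add_apply_eq_and_cayley_apply_eq (hT : IsUnit (1 + T)) (v : V) :
    ∃ x, x + T x = v ∧ cayley T v = x - T x := by
  obtain ⟨u, hu⟩ := hT
  have hx : (1 + T) (u.inv v) = v := by
    rw [← hu]; exact congr($(u.val_inv) v)
  refine ⟨u.inv v, hx, ?_⟩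
  have h := congr($(cayley_mul_one_add ⟨u, hu⟩) (u.inv v))
  rwa [mul_apply_eq_comp, hx] at h

theorem strictlyContracts_cayley (hB : B.IsSymm) (h : Tames B T) (hT : IsUnit (1 + T)) :
    StrictlyContracts B (cayley T) := fun v hv => by
  obtain ⟨x, rfl, hx⟩ := exists_add_apply_eq_and_cayley_apply_eq hT v
  have hx₀ : x ≠ 0 := by
    rintro rfl
    simp at hv
  have h_symm : B (T x) x = B x (T x) := hB.eq (T x) x
  have h_pos := h x hx₀
  simp only [hx, map_add, map_sub, LinearMap.add_apply, LinearMap.sub_apply]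
  linarith

theorem tames_cayley (hB : B.IsSymm) (h : StrictlyContracts B T) (hT : IsUnit (1 + T)) :
    Tames B (cayley T) := fun v hv => by
  obtain ⟨x, rfl, hx⟩ := exists_add_apply_eq_and_cayley_apply_eq hT v
  have hx₀ : x ≠ 0 := by
    rintro rfl
    simp at hv
  have h_symm : B (T x) x = B x (T x) := hB.eq (T x) x
  have h_lt := h x hx₀
  simp only [hx, map_add, map_sub, LinearMap.add_apply]
  linarith

end Tames

section Existence

variable {V : Type*} [NormedAddCommGroup V] [NormedSpace ℝ V]
  {ω B : V →ₗ[ℝ] V →ₗ[ℝ] ℝ}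

theorem exists_isSymm_tames_one_invariant [FiniteDimensional ℝ V] {c : V →L[ℝ] V}
    (hc : c * c = 1) :
    ∃ B : V →ₗ[ℝ] V →ₗ[ℝ] ℝ, B.IsSymm ∧ Tames B 1 ∧ ∀ u v, B (c u) (c v) = B u v := by
  let g : V →ₗ[ℝ] V →ₗ[ℝ] ℝ := (innerₗ (EuclideanSpace ℝ (Fin (Module.finrank ℝ V)))).compl₁₂
    (toEuclidean (E := V)).toLinearMap (toEuclidean (E := V)).toLinearMap
  have hg_symm (u v : V) : g u v = g v u :=
    real_inner_comm (toEuclidean v) (toEuclidean u)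
  have hg_nonneg (v : V) : 0 ≤ g v v :=
    real_inner_self_nonneg (x := toEuclidean v)
  have hg_pos (v : V) (hv : v ≠ 0) : 0 < g v v :=
    real_inner_self_pos.2 (toEuclidean.map_ne_zero_iff.2 hv)
  have hcc (v : V) : c (c v) = v := congr($hc v)
  refine ⟨g + g.compl₁₂ c.toLinearMap c.toLinearMap, ⟨fun u v => ?_⟩, fun v hv => ?_,
    fun u v => ?_⟩
  · simp [hg_symm u v, hg_symm (c u) (c v)]
  · exact add_pos_of_pos_of_nonneg (hg_pos v hv) (hg_nonneg (c v))
  · simp [hcc, add_comm]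

theorem exists_units_apply_eq [FiniteDimensional ℝ V] (hω : ω.Nondegenerate) (hB : B.IsSymm)
    (hpos : Tames B 1) : ∃ d : (V →L[ℝ] V)ˣ, ∀ u v, ω u ((d : V →L[ℝ] V) v) = B u v := by
  let D : V →L[ℝ] V := (LinearMap.BilinForm.symmCompOfNondegenerate B ω.flip
    (LinearMap.flip_nondegenerate.2 hω)).toContinuousLinearMap
  have hD (u v : V) : ω u (D v) = B u v :=
    (LinearMap.BilinForm.symmCompOfNondegenerate_left_apply B (B₂ := ω.flip) _ u v).trans
      (hB.eq v u)
  have hD_tames : Tames ω D := fun v hv => (hD v v).symm ▸ hpos v hv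
  exact ⟨hD_tames.isUnit.unit, hD⟩

theorem semiconjBy_neg_of_apply_eq {c d : V →L[ℝ] V} (hω : ω.SeparatingRight) (hc : c * c = 1)
    (hanti : ∀ u v, ω (c u) (c v) = -ω u v) (hB : ∀ u v, B (c u) (c v) = B u v)
    (hd : ∀ u v, ω u (d v) = B u v) : SemiconjBy d c (-c) := by
  ext v
  refine sub_eq_zero.1 (hω _ fun u => ?_)
  have hcc : c (c u) = u := congr($hc u)
  calc ω u (d (c v) - -c (d v)) = B (c (c u)) (c v) + ω (c (c u)) (c (d v)) := by
        rw [sub_neg_eq_add, map_add, hd, hcc]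
    _ = 0 := by rw [hB, hanti, hd, add_neg_cancel]

variable {d : (V →L[ℝ] V)ˣ} {p : V →L[ℝ] V}

theorem apply_quarterTurn (hω : ω.IsAlt)
    (hd : ∀ u v, ω u ((d : V →L[ℝ] V) v) = B u v) (hp : IsIdempotentElem p)
    (hpB : ∀ u v, B (p u) v = B u (p v)) (hdp : SemiconjBy ↑d p (1 - p)) (u v : V) :
    ω u (quarterTurn d p v) =
      B (p u) (p v) + B (p ((↑d⁻¹ : V →L[ℝ] V) v)) (p ((↑d⁻¹ : V →L[ℝ] V) u)) := by
  have hpp (x y : V) : B x (p y) = B (p x) (p y) := by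
    rw [hpB]; exact congr(B x ($(hp.eq.symm) y))
  have h_inv : ↑d⁻¹ * (1 - p) = p * ↑d⁻¹ := hdp.units_inv_symm_left.eq
  have hdu : (d : V →L[ℝ] V) ((↑d⁻¹ : V →L[ℝ] V) u) = u := congr($(d.mul_inv) u)
  set y := (↑d⁻¹ : V →L[ℝ] V) v
  set x := (↑d⁻¹ : V →L[ℝ] V) u
  have h_turn : quarterTurn d p v = (d : V →L[ℝ] V) (p v) - p y := by
    rw [quarterTurn, h_inv]; rfl
  calc ω u (quarterTurn d p v) = B u (p v) - ω u (p y) := by rw [h_turn, map_sub, hd]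
    _ = B u (p v) + ω (p y) ((d : V →L[ℝ] V) x) := by rw [hdu, ← hω.neg u, sub_eq_add_neg]
    _ = B (p u) (p v) + B (p y) (p x) := by rw [hpp u, hd, hpB y x, hpp y x]

theorem isSymm_compl₂_quarterTurn (hω : ω.IsAlt) (hB : B.IsSymm)
    (hd : ∀ u v, ω u ((d : V →L[ℝ] V) v) = B u v) (hp : IsIdempotentElem p)
    (hpB : ∀ u v, B (p u) v = B u (p v)) (hdp : SemiconjBy ↑d p (1 - p)) :
    (ω.compl₂ (quarterTurn d p).toLinearMap).IsSymm where
  eq u v := by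
    have h_apply := apply_quarterTurn hω hd hp hpB hdp
    change ω u (quarterTurn d p v) = ω v (quarterTurn d p u)
    rw [h_apply, h_apply]
    exact congrArg₂ (· + ·) (hB.eq _ _) (hB.eq _ _)

theorem tames_quarterTurn (hω : ω.IsAlt) (hpos : Tames B 1)
    (hd : ∀ u v, ω u ((d : V →L[ℝ] V) v) = B u v) (hp : IsIdempotentElem p)
    (hpB : ∀ u v, B (p u) v = B u (p v)) (hdp : SemiconjBy ↑d p (1 - p)) :
    Tames ω (quarterTurn d p) := fun v hv => by
  have h_inv : ↑d⁻¹ * (1 - p) = p * ↑d⁻¹ := hdp.units_inv_symm_left.eq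
  rw [apply_quarterTurn hω hd hp hpB hdp]
  by_cases hpv : p v = 0
  · refine add_pos_of_nonneg_of_pos (hpos.nonneg _) (hpos _ fun h_zero => hv ?_)
    have h_inv_zero : (↑d⁻¹ : V →L[ℝ] V) v = 0 := by
      have h := congr($h_inv v)
      simpa [hpv, h_zero] using h
    calc v = (d : V →L[ℝ] V) ((↑d⁻¹ : V →L[ℝ] V) v) := congr($(d.mul_inv.symm) v)
      _ = 0 := by rw [h_inv_zero, map_zero]
  · exact add_pos_of_pos_of_nonneg (hpos _ hpv) (hpos.nonneg _)

end Existence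

section RealTamedStructures

variable {V : Type*} [NormedAddCommGroup V] [NormedSpace ℝ V]
  {ω : V →ₗ[ℝ] V →ₗ[ℝ] ℝ} {c j : V →L[ℝ] V}

/-- The space `ℝ𝒥` of complex structures tamed by `ω` that anticommute with `c`. -/
def realTamedStructures (ω : V →ₗ[ℝ] V →ₗ[ℝ] ℝ) (c : V →L[ℝ] V) : Set (V →L[ℝ] V) :=
  {J | J * J = -1 ∧ Tames ω J ∧ SemiconjBy c J (-J)}

/-- The strict contractions for `ω(·, j ·)` that anticommute with `j` and commute with `c`: the
image of `realTamedStructures ω c` under `J ↦ cayley (-(j * J))`. -/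
def realContractions (ω : V →ₗ[ℝ] V →ₗ[ℝ] ℝ) (j c : V →L[ℝ] V) : Set (V →L[ℝ] V) :=
  {A | StrictlyContracts (ω.compl₂ j.toLinearMap) A ∧ SemiconjBy j A (-A) ∧ Commute c A}

theorem exists_mem_realTamedStructures_isSymm [FiniteDimensional ℝ V] (hω : ω.IsAlt)
    (hnondeg : ω.Nondegenerate) (hc : c * c = 1) (hanti : ∀ u v, ω (c u) (c v) = -ω u v) :
    ∃ j ∈ realTamedStructures ω c, (ω.compl₂ j.toLinearMap).IsSymm := by
  obtain ⟨B, hB, hB_pos, hBc⟩ := exists_isSymm_tames_one_invariant hc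
  obtain ⟨d, hd⟩ := exists_units_apply_eq hnondeg hB hB_pos
  let p : V →L[ℝ] V := (1 / 2 : ℝ) • (1 + c)
  have hp : IsIdempotentElem p := isIdempotentElem_half_smul_one_add hc
  have hdp : SemiconjBy ↑d p (1 - p) := semiconjBy_half_smul_one_add_iff.2
    (semiconjBy_neg_of_apply_eq hnondeg.2 hc hanti hBc hd)
  have hpB (u v : V) : B (p u) v = B u (p v) := by
    have hcB : B (c u) v = B u (c v) := by
      rw [← hBc u (c v)]; exact congr(B (c u) ($hc.symm v))
    simp [p, hcB]
  have hjc : SemiconjBy (quarterTurn d p) c (-c) :=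
    semiconjBy_half_smul_one_add_iff.1 (semiconjBy_quarterTurn hp hdp)
  refine ⟨quarterTurn d p, ⟨quarterTurn_mul_self hp hdp, tames_quarterTurn hω hB_pos hd hp hpB hdp,
    ?_⟩, isSymm_compl₂_quarterTurn hω hB hd hp hpB hdp⟩
  rw [SemiconjBy, neg_mul, hjc.eq, neg_mul, neg_neg]

theorem starConvex_realContractions (hj : Tames ω j) :
    StarConvex ℝ 0 (realContractions ω j c) := by
  rw [starConvex_zero_iff]
  rintro A ⟨hA, hjA, hcA⟩ t ht₀ ht₁
  refine ⟨hA.smul hj ht₀ ht₁, ?_, hcA.smul_right t⟩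
  rw [SemiconjBy, mul_smul_comm, hjA.eq, ← smul_neg, smul_mul_assoc]

theorem contractibleSpace_realContractions (hj : Tames ω j) :
    ContractibleSpace (realContractions ω j c) :=
  (starConvex_realContractions hj).contractibleSpace
    ⟨0, fun v hv => by simpa using hj v hv, by simp, Commute.zero_right c⟩

theorem tames_compl₂_neg_mul {J : V →L[ℝ] V} (hjj : j * j = -1) (hJ : Tames ω J) :
    Tames (ω.compl₂ j.toLinearMap) (-(j * J)) := by
  have hJ_eq : j * -(j * J) = J := by rw [mul_neg, ← mul_assoc, hjj, neg_one_mul, neg_neg]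
  exact fun v hv => (hJ v hv).trans_eq congr(ω v ($hJ_eq.symm v))

theorem isUnit_one_add_neg_mul [FiniteDimensional ℝ V] {J : V →L[ℝ] V} (hjj : j * j = -1)
    (hj : Tames ω j) (hJ : Tames ω J) : IsUnit (1 + -(j * J)) :=
  Tames.isUnit (B := ω.compl₂ j.toLinearMap) (Tames.add hj (tames_compl₂_neg_mul hjj hJ))

theorem cayley_neg_mul_mem_realContractions [FiniteDimensional ℝ V] {J : V →L[ℝ] V}
    (hj : j ∈ realTamedStructures ω c) (hsymm : (ω.compl₂ j.toLinearMap).IsSymm)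
    (hJ : J ∈ realTamedStructures ω c) : cayley (-(j * J)) ∈ realContractions ω j c := by
  obtain ⟨hjj, hj_pos, hcj⟩ := hj
  obtain ⟨hJJ, hJ_pos, hcJ⟩ := hJ
  have hu := isUnit_one_add_neg_mul hjj hj_pos hJ_pos
  refine ⟨strictlyContracts_cayley hsymm (tames_compl₂_neg_mul hjj hJ_pos) hu,
    semiconjBy_cayley_neg hu ?_, commute_cayley hu ?_⟩
  · calc -(j * J) * j * -(j * J) = j * J * (j * j) * J := by noncomm_ring
      _ = -(j * (J * J)) := by rw [hjj]; noncomm_ring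
      _ = j := by rw [hJJ]; noncomm_ring
  · have hcjJ : SemiconjBy c (j * J) (-j * -J) := hcj.mul_right hcJ
    rw [neg_mul_neg] at hcjJ
    exact Commute.neg_right hcjJ

theorem mul_cayley_mem_realTamedStructures [FiniteDimensional ℝ V] {A : V →L[ℝ] V}
    (hj : j ∈ realTamedStructures ω c) (hsymm : (ω.compl₂ j.toLinearMap).IsSymm)
    (hA : A ∈ realContractions ω j c) : j * cayley A ∈ realTamedStructures ω c := by
  obtain ⟨hjj, -, hcj⟩ := hj
  obtain ⟨hA_lt, hjA, hcA⟩ := hA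
  have hu : IsUnit (1 + A) := hA_lt.isUnit_one_add
  refine ⟨?_, tames_cayley hsymm hA_lt hu, ?_⟩
  · rw [mul_assoc, ← mul_assoc (cayley A), cayley_mul_mul_cayley hu hjA, hjj]
  · simpa only [neg_mul] using hcj.mul_right (commute_cayley hu hcA)

theorem mul_cayley_cayley_neg_mul [FiniteDimensional ℝ V] {J : V →L[ℝ] V} (hjj : j * j = -1)
    (hj : Tames ω j) (hJ : Tames ω J) : j * cayley (cayley (-(j * J))) = J := by
  have h2 : IsUnit (2 : V →L[ℝ] V) := by
    rw [← map_ofNat (algebraMap ℝ (V →L[ℝ] V)) 2]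
    exact (IsUnit.mk0 (2 : ℝ) two_ne_zero).map _
  rw [cayley_cayley h2 (isUnit_one_add_neg_mul hjj hj hJ), mul_neg, ← mul_assoc, hjj, neg_one_mul,
    neg_neg]

theorem contractibleSpace_realTamedStructures [FiniteDimensional ℝ V]
    (hj : j ∈ realTamedStructures ω c) (hsymm : (ω.compl₂ j.toLinearMap).IsSymm) :
    ContractibleSpace (realTamedStructures ω c) := by
  have : CompleteSpace V := FiniteDimensional.complete ℝ V
  have : ContractibleSpace (realContractions ω j c) := contractibleSpace_realContractions hj.2.1
  refine contractibleSpace_of_leftInvOn (f := fun J => cayley (-(j * J)))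
    (g := fun A => j * cayley A) (t := realContractions ω j c) (fun J hJ => ?_) (fun A hA => ?_)
    (fun J hJ => cayley_neg_mul_mem_realContractions hj hsymm hJ)
    (fun A hA => mul_cayley_mem_realTamedStructures hj hsymm hA)
    (fun J hJ => mul_cayley_cayley_neg_mul hj.1 hj.2.1 hJ.2.1)
  · have h_cayley := continuousAt_cayley (isUnit_one_add_neg_mul hj.1 hj.2.1 hJ.2.1)
    exact (h_cayley.comp (f := fun J => -(j * J)) (by fun_prop)).continuousWithinAt
  · exact (continuousAt_const.mul (continuousAt_cayley hA.1.isUnit_one_add)).continuousWithinAt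

end RealTamedStructures

/-- Let `V` be a finite-dimensional real vector space with a symplectic form
`ω`, and let `c : V → V` be a linear anti-symplectic involution. Consider the set
`ℝ𝒥 = {J | J ∘ J = −id, ω(v, J v) > 0 for all v ≠ 0, c ∘ J = −J ∘ c}`, topologized as a
subspace of the space of continuous linear endomorphisms of `V`. Then `ℝ𝒥` is non-empty and
contractible. -/
theorem real_tamed_complex_structures_nonempty_contractible
    (V : Type*) [NormedAddCommGroup V] [NormedSpace ℝ V] [FiniteDimensional ℝ V]
    (ω : V →ₗ[ℝ] V →ₗ[ℝ] ℝ)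
    (halt : ∀ v : V, ω v v = 0)
    (hnondeg : ∀ v : V, (∀ w : V, ω v w = 0) → v = 0)
    (c : V →ₗ[ℝ] V) (hc : ∀ v : V, c (c v) = v)
    (hanti : ∀ u v : V, ω (c u) (c v) = - ω u v)
    (S : Set (V →L[ℝ] V))
    (hS : ∀ J : V →L[ℝ] V, J ∈ S ↔
      ((∀ v : V, J (J v) = -v) ∧
       (∀ v : V, v ≠ 0 → 0 < ω v (J v)) ∧
       (∀ v : V, c (J v) = - J (c v)))) :
    S.Nonempty ∧ ContractibleSpace S := by
  let C : V →L[ℝ] V := c.toContinuousLinearMap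
  have hC : C * C = 1 := ContinuousLinearMap.ext hc
  have hω : ω.IsAlt := halt
  have hω_nondeg : ω.Nondegenerate := hω.isRefl.nondegenerate_iff_separatingLeft.2 hnondeg
  have hS_eq : S = realTamedStructures ω C := by
    ext J
    have h_anti : SemiconjBy C J (-J) ↔ ∀ v, c (J v) = -J (c v) := ContinuousLinearMap.ext_iff
    have h_sq : J * J = -1 ↔ ∀ v, J (J v) = -v := ContinuousLinearMap.ext_iff
    rw [hS, ← h_anti, ← h_sq]
    rfl
  obtain ⟨j, hj, hj_symm⟩ := exists_mem_realTamedStructures_isSymm hω hω_nondeg hC hanti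
  rw [hS_eq]
  exact ⟨⟨j, hj⟩, contractibleSpace_realTamedStructures hj hj_symm⟩
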